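/- For every positive integer n there exists a finite 2-generated group G with e(G) ≥ n and an element g ∈ G with e(G,g) ≤ 5. -/

import Mathlib

open Subgroup

noncomputable def genProb (G : Type*) [Group G] (Y : Set G) (n : ℕ) : ℝ :=
  (Nat.card {v : Fin n → G // Subgroup.closure (Y ∪ Set.range v) = ⊤} : ℝ) /
    (Nat.card G : ℝ) ^ n

noncomputable def eTime (G : Type*) [Group G] (Y : Set G) : ℝ :=
  ∑' n : ℕ, (1 - genProb G Y n)

/-!
Let `T` be the alternating group on `p + q` points, where `p = q + 2` is prime, and let
`G = T ^ N` with `N = (p + q) ^ (2 * n)`. A random `k`-tuple of `T` lies in a point stabilizer with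
probability `(p + q) ^ (-k)`, so for `k < 2 * n` the `N` independent coordinates make it
likely that some coordinate of a random `k`-tuple of `G` fails to generate `T`; hence `e(G) ≥ n`.

Take `g` to be the constant tuple whose entry is the product of a `p`-cycle and a `q`-cycle. As `T`
is simple, `g` and `x = (x₁, …, x_N)` generate `G` as soon as each `xᵢ` generates `T` together with
the entry of `g` and no automorphism of `T` fixing that entry carries some `xⱼ` to another `xᵢ`.
By Jordan's theorem on primitive groups containing a `p`-cycle, an element of `T` generates `T`
together with the entry of `g` unless it preserves the two cycles. Compared with `|T|`, the number
of such elements and the number of automorphisms fixing the entry are exponentially small in `q`,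
whereas `N` is polynomial in `q`. So a single random `x` almost always suffices.
-/

open Equiv Equiv.Perm MulAction
open scoped commutatorElement

section Jordan

lemma commute_commutatorElement_of_conj_mem_zpowers {G : Type*} [Group G] {a b h : G}
    (ha : a * h * a⁻¹ ∈ zpowers h) (hb : b * h * b⁻¹ ∈ zpowers h) : Commute ⁅a⁻¹, b⁻¹⁆ h := by
  obtain ⟨i, hi⟩ := mem_zpowers_iff.1 ha
  obtain ⟨j, hj⟩ := mem_zpowers_iff.1 hb
  have hab : MulAut.conj a (MulAut.conj b h) = MulAut.conj b (MulAut.conj a h) := by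
    rw [MulAut.conj_apply b h, MulAut.conj_apply a h, ← hi, ← hj, map_zpow, map_zpow,
      MulAut.conj_apply, MulAut.conj_apply, ← hi, ← hj, ← zpow_mul, ← zpow_mul, mul_comm]
  have hconj : MulAut.conj ⁅a⁻¹, b⁻¹⁆ h = h := by
    simp only [commutatorElement_def, inv_inv, map_mul, MulAut.mul_apply, hab]
    simp only [map_inv, MulAut.inv_apply_self]
  rw [MulAut.conj_apply] at hconj
  exact mul_inv_eq_iff_eq_mul.1 hconj

lemma exists_mem_zpowers_conj_eq_of_not_sq_dvd {G : Type*} [Group G] {K : Subgroup G} [Finite K]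
    {p : ℕ} [hp : Fact p.Prime] (hK : ¬p ^ 2 ∣ Nat.card K) {a b : G} (ha : a ∈ K) (hb : b ∈ K)
    (hap : orderOf a = p) (hbp : orderOf b = p) : ∃ v ∈ K, zpowers (v * a * v⁻¹) = zpowers b := by
  have hfac : (Nat.card K).factorization p = 1 := by
    have hdvd : p ∣ Nat.card K := by
      simpa [hap] using orderOf_dvd_natCard (⟨a, ha⟩ : K)
    refine le_antisymm ?_ ((hp.out.dvd_iff_one_le_factorization Nat.card_pos.ne').1 hdvd)
    by_contra! h
    exact hK ((hp.out.pow_dvd_iff_le_factorization Nat.card_pos.ne').2 h)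
  let sylow (x : K) (hx : orderOf (x : G) = p) : Sylow p K :=
    Sylow.ofCard (zpowers x) (by rw [Nat.card_zpowers, ← Subgroup.orderOf_coe, hx, hfac, pow_one])
  obtain ⟨v, hv⟩ := exists_smul_eq K (sylow ⟨a, ha⟩ hap) (sylow ⟨b, hb⟩ hbp)
  refine ⟨v, v.2, ?_⟩
  have hconj : (zpowers (⟨a, ha⟩ : K)).map (MulAut.conj v).toMonoidHom = zpowers ⟨b, hb⟩ :=
    congrArg Sylow.toSubgroup hv
  rw [MonoidHom.map_zpowers] at hconj
  simpa [MonoidHom.map_zpowers] using congrArg (Subgroup.map K.subtype) hconj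

variable {α : Type*} {c h σ : Perm α}

lemma apply_apply_eq_of_commute (hc : Commute c h) {x : α} (hx : h x = x) : h (c x) = c x := by
  rw [← Perm.mul_apply, ← hc.eq, Perm.mul_apply, hx]

lemma inv_apply_eq_of_forall_fixed (hσ : Commute σ h) (hcσ : ∀ x, h x = x → c x = σ x) {x : α}
    (hx : h x = x) : c⁻¹ x = σ⁻¹ x := by
  rw [inv_eq_iff_eq, hcσ _ (apply_apply_eq_of_commute hσ.inv_left hx), ← Perm.mul_apply,
    mul_inv_cancel, Perm.one_apply]

lemma pow_orderOf_apply_eq_self_of_commute (hh : h.IsCycle) (hc : Commute c h) {x : α}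
    (hx : h x ≠ x) : (c ^ orderOf h) x = x := by
  have hcx : h (c x) ≠ c x := by
    rw [← Perm.mul_apply, ← hc.eq]
    exact fun hfix => hx (c.injective hfix)
  obtain ⟨i, hi⟩ := hh.sameCycle hx hcx
  have hpow : ∀ n : ℕ, (c ^ n) x = ((h ^ i) ^ n) x := by
    intro n
    induction n with
    | zero => rfl
    | succ n ih =>
      rw [pow_succ', Perm.mul_apply, ih, ← Perm.mul_apply,
        ((hc.zpow_right i).pow_right n).eq, Perm.mul_apply, ← hi, ← Perm.mul_apply, ← pow_succ]
  rw [hpow, ← zpow_natCast, ← zpow_mul, mul_comm, zpow_mul, zpow_natCast, pow_orderOf_eq_one,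
    one_zpow, Perm.one_apply]

lemma pow_orderOf_eq_of_commute_of_forall_fixed (hh : h.IsCycle) (hc : Commute c h)
    (hσ : σ.Disjoint h) (hcσ : ∀ x, h x = x → c x = σ x) : c ^ orderOf h = σ ^ orderOf h := by
  ext x
  by_cases hx : h x = x
  · have hpow : ∀ n : ℕ, (c ^ n) x = (σ ^ n) x := by
      intro n
      induction n with
      | zero => rfl
      | succ n ih =>
        have hfix := apply_apply_eq_of_commute (hσ.commute.pow_left n) hx
        rw [pow_succ', Perm.mul_apply, ih, hcσ _ hfix, pow_succ', Perm.mul_apply]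
    exact hpow _
  · rw [pow_orderOf_apply_eq_self_of_commute hh hc hx,
      pow_apply_eq_self_of_apply_eq_self ((hσ x).resolve_right hx)]

variable {G : Subgroup (Perm α)} {p : ℕ}

lemma exists_mem_eqOn_of_isMultiplyPretransitive {s : Finset α}
    (hG : IsMultiplyPretransitive G α s.card) (σ : Perm α) : ∃ u ∈ G, Set.EqOn u σ s := by
  let f : Fin s.card ↪ α := s.equivFin.symm.toEmbedding.trans (.subtype _)
  obtain ⟨⟨u, hu⟩, huf⟩ := isMultiplyPretransitive_iff.1 hG f (f.trans σ.toEmbedding)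
  refine ⟨u, hu, fun x hx => ?_⟩
  have hfx : f (s.equivFin ⟨x, hx⟩) = x := by simp [f]
  simpa [hfx] using! DFunLike.congr_fun huf (s.equivFin ⟨x, hx⟩)

lemma natCard_fixingSubgroup_perm [Finite α] (s : Set α) :
    Nat.card (fixingSubgroup (Perm α) s) = (Nat.card α - s.ncard).factorial := by
  have hindex := (isMultiplyPretransitive α s.ncard).index_of_fixingSubgroup_mul rfl
  have hcard := (fixingSubgroup (Perm α) s).index_mul_card
  rw [Nat.card_perm, ← hindex] at hcard
  exact Nat.eq_of_mul_eq_mul_left (Nat.pos_of_ne_zero FiniteIndex.index_ne_zero) hcard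

variable [Fintype α] [DecidableEq α]

lemma not_sq_dvd_natCard_inf_fixingSubgroup_compl_support (hp : p.Prime)
    (hhp : h.support.card = p) :
    ¬p ^ 2 ∣ Nat.card (G ⊓ fixingSubgroup (Perm α) (h.support : Set α)ᶜ : Subgroup (Perm α)) := by
  intro hdvd
  have hcard : Nat.card (fixingSubgroup (Perm α) (h.support : Set α)ᶜ) = p.factorial := by
    rw [natCard_fixingSubgroup_perm, ← Set.ncard_add_ncard_compl (h.support : Set α),
      Nat.add_sub_cancel, Set.ncard_coe_finset, hhp]
  have hsq : p * p ∣ p * (p - 1).factorial := by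
    rw [← sq, Nat.mul_factorial_pred hp.ne_zero, ← hcard]
    exact hdvd.trans (card_dvd_of_le inf_le_right)
  have hle : p ≤ p - 1 := hp.dvd_factorial.1 (Nat.dvd_of_mul_dvd_mul_left hp.pos hsq)
  exact absurd hle (Nat.sub_one_lt hp.ne_zero).not_ge

-- Frattini argument: correct an element of `G` extending `σ` by an element of the pointwise
-- stabilizer of the fixed points, where Sylow `p`-subgroups have order `p`.
lemma exists_mem_conj_mem_zpowers_forall_fixed (hp : p.Prime) (hh : h.IsCycle)
    (hhp : h.support.card = p) (hhG : h ∈ G) (hG : IsMultiplyPretransitive G α h.supportᶜ.card)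
    (hσ : σ.Disjoint h) :
    ∃ u ∈ G, u * h * u⁻¹ ∈ zpowers h ∧ ∀ x, h x = x → u x = σ x := by
  have : Fact p.Prime := ⟨hp⟩
  obtain ⟨u, huG, hu⟩ := exists_mem_eqOn_of_isMultiplyPretransitive hG σ
  replace hu : ∀ x, h x = x → u x = σ x := fun x hx => hu (by simpa using hx)
  have hufix : ∀ x, h x = x → h (u⁻¹ x) = u⁻¹ x := fun x hx => by
    rw [inv_apply_eq_of_forall_fixed hσ.commute hu hx,
      apply_apply_eq_of_commute hσ.commute.inv_left hx]
  let K := G ⊓ fixingSubgroup (Perm α) (h.support : Set α)ᶜ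
  have mem_K {k : Perm α} : k ∈ K ↔ k ∈ G ∧ ∀ x, h x = x → k x = x := by
    simp [K, mem_fixingSubgroup_iff]
  have hord : orderOf h = p := hh.orderOf.trans hhp
  have hhK : h ∈ K := mem_K.2 ⟨hhG, fun _ => id⟩
  have huK : u * h * u⁻¹ ∈ K := mem_K.2
    ⟨mul_mem (mul_mem huG hhG) (inv_mem huG), fun x hx => by
      rw [Perm.mul_apply, Perm.mul_apply, hufix x hx, ← Perm.mul_apply, mul_inv_cancel,
        Perm.one_apply]⟩
  obtain ⟨v, hvK, hv⟩ := exists_mem_zpowers_conj_eq_of_not_sq_dvd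
    (not_sq_dvd_natCard_inf_fixingSubgroup_compl_support hp hhp) huK hhK
    (by rw [← MulAut.conj_apply, MulEquiv.orderOf_eq, hord]) hord
  obtain ⟨hvG, hvfix⟩ := mem_K.1 hvK
  refine ⟨v * u, mul_mem hvG huG, ?_, fun x hx => ?_⟩
  · rw [← hv]
    convert mem_zpowers (v * (u * h * u⁻¹) * v⁻¹) using 1
    group
  · rw [Perm.mul_apply, hu x hx, hvfix _ (apply_apply_eq_of_commute hσ.commute hx)]

lemma natCard_ofFixingSubgroup_compl_support (h : Perm α) :
    Nat.card (SubMulAction.ofFixingSubgroup G (h.support : Set α)ᶜ) = h.support.card := by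
  classical
  rw [Nat.card_eq_fintype_card, Fintype.card_subtype]
  congr
  ext x
  simp [SubMulAction.mem_ofFixingSubgroup_iff]

lemma isPreprimitive_ofFixingSubgroup_compl_support_of_prime (hp : p.Prime) (hh : h.IsCycle)
    (hhp : h.support.card = p) (hhG : h ∈ G) :
    IsPreprimitive (fixingSubgroup G (h.support : Set α)ᶜ)
      (SubMulAction.ofFixingSubgroup G (h.support : Set α)ᶜ) := by
  have := isPretransitive_of_isCycle_mem hh hhG
  exact IsPreprimitive.of_prime_card (by rwa [natCard_ofFixingSubgroup_compl_support, hhp])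

lemma isPreprimitive_of_isCycle_mem_of_card_lt [IsPretransitive G α] (hp : p.Prime)
    (hh : h.IsCycle) (hhp : h.support.card = p) (hhG : h ∈ G) (hcard : Nat.card α < 2 * p) :
    IsPreprimitive G α := by
  have := isPreprimitive_ofFixingSubgroup_compl_support_of_prime hp hh hhp hhG
  let f : SubMulAction.ofFixingSubgroup G (h.support : Set α)ᶜ →ₑ[
      (Subtype.val : fixingSubgroup G (h.support : Set α)ᶜ → G)] α :=
    { toFun := Subtype.val
      map_smul' := fun _ _ => rfl }
  refine IsPreprimitive.of_card_lt (f := f) ?_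
  have hf : Function.Injective f := Subtype.val_injective
  rwa [← Set.image_univ, Set.ncard_image_of_injective _ hf, Set.ncard_univ,
    natCard_ofFixingSubgroup_compl_support, hhp]

lemma isMultiplyPretransitive_of_isCycle_prime_mem (hG : IsPreprimitive G α) (hp : p.Prime)
    (hp' : p < Nat.card α) (hh : h.IsCycle) (hhp : h.support.card = p) (hhG : h ∈ G) :
    IsMultiplyPretransitive G α h.supportᶜ.card := by
  have hcompl : h.supportᶜ.card + p = Nat.card α := by
    rw [← hhp, Nat.card_eq_fintype_card, Finset.card_compl_add_card]
  have hp2 := hp.two_le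
  obtain ⟨n, hn⟩ : ∃ n, h.supportᶜ.card = n + 1 := Nat.exists_eq_succ_of_ne_zero (by omega)
  have hs : ((h.support : Set α)ᶜ).ncard = n + 1 := by
    rw [← Finset.coe_compl, Set.ncard_coe_finset, hn]
  have := (hG.isMultiplyPreprimitive hs (by omega)
    (isPreprimitive_ofFixingSubgroup_compl_support_of_prime hp hh hhp hhG)).isMultiplyPretransitive
  rw [hn]
  exact isMultiplyPretransitive_of_le (n := n + 2) (by omega) (by omega)

-- `σ` and `ρ` lift to elements of `G` normalizing `⟨h⟩`. As `Aut ⟨h⟩` is abelian, the commutator of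
-- the lifts centralizes the `p`-cycle `h`, so its `p`-th power is trivial on the support of `h`.
lemma commutatorElement_pow_mem_of_disjoint (hp : p.Prime) (hh : h.IsCycle)
    (hhp : h.support.card = p) (hhG : h ∈ G) (hG : IsMultiplyPretransitive G α h.supportᶜ.card)
    {ρ : Perm α} (hσ : σ.Disjoint h) (hρ : ρ.Disjoint h) : ⁅σ, ρ⁆ ^ p ∈ G := by
  obtain ⟨m, hmG, hmh, hm⟩ :=
    exists_mem_conj_mem_zpowers_forall_fixed hp hh hhp hhG hG hσ.inv_left
  obtain ⟨n, hnG, hnh, hn⟩ :=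
    exists_mem_conj_mem_zpowers_forall_fixed hp hh hhp hhG hG hρ.inv_left
  have hw : ∀ x, h x = x → ⁅m⁻¹, n⁻¹⁆ x = ⁅σ, ρ⁆ x := fun x hx => by
    have hσi := hσ.commute.inv_left
    have hρi := hρ.commute.inv_left
    have hnx := apply_apply_eq_of_commute hρi hx
    have hmnx := apply_apply_eq_of_commute hσi hnx
    have hnmnx := apply_apply_eq_of_commute hρi.inv_left hmnx
    rw [commutatorElement_def, commutatorElement_def, inv_inv, inv_inv]
    simp only [Perm.mul_apply]
    rw [hn x hx, hm _ hnx, inv_apply_eq_of_forall_fixed hρi hn hmnx,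
      inv_apply_eq_of_forall_fixed hσi hm hnmnx, inv_inv, inv_inv]
  have hdisj : ⁅σ, ρ⁆.Disjoint h :=
    ((hσ.mul_left hρ).mul_left hσ.inv_left).mul_left hρ.inv_left
  have hpow := pow_orderOf_eq_of_commute_of_forall_fixed hh
    (commute_commutatorElement_of_conj_mem_zpowers hmh hnh) hdisj hw
  rw [hh.orderOf, hhp] at hpow
  rw [← hpow, commutatorElement_def]
  exact pow_mem (mul_mem (mul_mem (mul_mem (inv_mem hmG) (inv_mem hnG)) (inv_mem (inv_mem hmG)))
    (inv_mem (inv_mem hnG))) _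

theorem alternatingGroup_le_of_isPreprimitive_of_isCycle_mem (hG : IsPreprimitive G α)
    (hp : p.Prime) (hp' : p + 3 ≤ Nat.card α) (hh : h.IsCycle) (hhp : h.support.card = p)
    (hhG : h ∈ G) : alternatingGroup α ≤ G := by
  rcases eq_or_ne p 3 with rfl | hp3
  · exact alternatingGroup_le_of_isPreprimitive_of_isThreeCycle_mem hG
      (card_support_eq_three_iff.1 hhp) hhG
  have hmt := isMultiplyPretransitive_of_isCycle_prime_mem hG hp (by omega) hh hhp hhG
  have hfix : 2 < h.supportᶜ.card := by
    rw [Finset.card_compl, ← Nat.card_eq_fintype_card, hhp]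
    omega
  obtain ⟨a, ha, b, hb, c, hc, hab, hac, hbc⟩ := Finset.two_lt_card.1 hfix
  simp only [Finset.mem_compl, notMem_support] at ha hb hc
  have hdisj : ∀ {x y : α}, h x = x → h y = y → (swap x y).Disjoint h := fun hx hy z => by
    by_contra! hz
    rcases (swap_apply_ne_self_iff.1 hz.1).2 with rfl | rfl
    exacts [hz.2 hx, hz.2 hy]
  have hτ : ⁅swap a b, swap a c⁆.IsThreeCycle := by
    simpa [commutatorElement_def, mul_assoc] using
      (isThreeCycle_swap_mul_swap_same hab hac hbc).isThreeCycle_sq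
  have hcoprime : p.Coprime (orderOf ⁅swap a b, swap a c⁆) := by
    rw [hτ.orderOf]
    exact (Nat.coprime_primes hp Nat.prime_three).2 hp3
  obtain ⟨k, hk⟩ := exists_pow_eq_self_of_coprime hcoprime
  have hpow := commutatorElement_pow_mem_of_disjoint hp hh hhp hhG hmt (hdisj ha hb) (hdisj ha hc)
  exact alternatingGroup_le_of_isPreprimitive_of_isThreeCycle_mem hG hτ (hk ▸ pow_mem hpow k)

end Jordan

section Subdirect

variable {ι : Type*} {T : ι → Type*} [∀ i, Group (T i)] {H : Subgroup (∀ i, T i)}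

/-- The subgroup of `T i` formed by the `i`-th coordinates of those elements of `H` whose
coordinates in `S` are trivial. A subgroup `H` of the product contains the factor `T i` exactly
when this is all of `T i` for `S = {i}ᶜ`. -/
def coordSubgroup (H : Subgroup (∀ i, T i)) (i : ι) (S : Set ι) : Subgroup (T i) :=
  (H ⊓ Subgroup.pi S fun _ => ⊥).map (Pi.evalMonoidHom T i)

lemma mem_coordSubgroup {i : ι} {S : Set ι} {t : T i} :
    t ∈ coordSubgroup H i S ↔ ∃ h ∈ H, (∀ j ∈ S, h j = 1) ∧ h i = t := by
  simp [coordSubgroup, Subgroup.mem_pi, and_assoc]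

lemma coordSubgroup_normal {i : ι} (hH : H.map (Pi.evalMonoidHom T i) = ⊤) (S : Set ι) :
    (coordSubgroup H i S).Normal := by
  refine ⟨fun t ht s => ?_⟩
  obtain ⟨h, hh, hS, rfl⟩ := mem_coordSubgroup.1 ht
  obtain ⟨k, hk, rfl⟩ : s ∈ H.map (Pi.evalMonoidHom T i) := hH ▸ mem_top s
  exact mem_coordSubgroup.2
    ⟨k * h * k⁻¹, mul_mem (mul_mem hk hh) (inv_mem hk), fun j hj => by simp [hS j hj], rfl⟩

lemma exists_mulEquiv_of_coordSubgroup_eq_bot {i j : ι} [Nontrivial (T i)] [IsSimpleGroup (T j)]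
    (hi : H.map (Pi.evalMonoidHom T i) = ⊤) (hj : H.map (Pi.evalMonoidHom T j) = ⊤)
    (hij : coordSubgroup H i {j} = ⊥) : ∃ φ : T j ≃* T i, ∀ h ∈ H, h i = φ (h j) := by
  let f (k : ι) : H →* T k := (Pi.evalMonoidHom T k).comp H.subtype
  have hf {k : ι} (hk : H.map (Pi.evalMonoidHom T k) = ⊤) : Function.Surjective (f k) := by
    rw [← MonoidHom.range_eq_top, MonoidHom.range_comp, H.range_subtype, hk]
  have hker : (f j).ker ≤ (f i).ker := fun h hh => by
    rw [MonoidHom.mem_ker] at hh ⊢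
    rw [← mem_bot, ← hij]
    exact mem_coordSubgroup.2 ⟨h, h.2, by simpa using! hh, rfl⟩
  let φ : T j →* T i := (f j).liftOfSurjective (hf hj) ⟨f i, hker⟩
  have hφ (h : H) : φ (f j h) = f i h :=
    (f j).liftOfRightInverse_comp_apply _ _ ⟨f i, hker⟩ h
  have hφsurj : Function.Surjective φ := .of_comp (g := f j) <| by
    simpa [Function.comp_def, hφ] using hf hi
  have hφinj : Function.Injective φ := by
    refine φ.ker_eq_bot_iff.1 (φ.normal_ker.eq_bot_or_eq_top.resolve_right fun htop => ?_)
    obtain ⟨t, ht⟩ := exists_ne (1 : T i)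
    obtain ⟨s, rfl⟩ := hφsurj t
    exact ht (φ.mem_ker.1 (htop ▸ mem_top s))
  exact ⟨.ofBijective φ ⟨hφinj, hφsurj⟩, fun h hh => (hφ ⟨h, hh⟩).symm⟩

lemma commutator_coordSubgroup_le (i : ι) (S S' : Set ι) :
    ⁅coordSubgroup H i S, coordSubgroup H i S'⁆ ≤ coordSubgroup H i (S ∪ S') := by
  refine commutator_le.2 fun a ha b hb => ?_
  obtain ⟨h, hh, hS, rfl⟩ := mem_coordSubgroup.1 ha
  obtain ⟨k, hk, kS, rfl⟩ := mem_coordSubgroup.1 hb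
  refine mem_coordSubgroup.2 ⟨⁅h, k⁆, ?_, ?_, rfl⟩
  · exact mul_mem (mul_mem (mul_mem hh hk) (inv_mem hh)) (inv_mem hk)
  · rintro j (hj | hj) <;> simp [commutatorElement_def, *]

variable [∀ i, IsSimpleGroup (T i)]

lemma coordSubgroup_eq_top_of_finite (hT : ∀ i, center (T i) = ⊥)
    (hsurj : ∀ i, H.map (Pi.evalMonoidHom T i) = ⊤)
    (hlink : ∀ i j, i ≠ j → ∀ φ : T j ≃* T i, ∃ h ∈ H, h i ≠ φ (h j))
    {i : ι} {S : Set ι} (hS : S.Finite) (hi : i ∉ S) : coordSubgroup H i S = ⊤ := by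
  induction S, hS using Set.Finite.induction_on with
  | empty => rw [coordSubgroup, Subgroup.pi_empty, inf_top_eq, hsurj i]
  | @insert j S _ _ ih =>
    rw [Set.mem_insert_iff, not_or] at hi
    have hpair : coordSubgroup H i {j} = ⊤ := by
      refine (coordSubgroup_normal (hsurj i) _).eq_bot_or_eq_top.resolve_left fun hbot => ?_
      obtain ⟨φ, hφ⟩ := exists_mulEquiv_of_coordSubgroup_eq_bot (hsurj i) (hsurj j) hbot
      obtain ⟨h, hh, hne⟩ := hlink i j hi.1 φ
      exact hne (hφ h hh)
    refine (coordSubgroup_normal (hsurj i) _).eq_bot_or_eq_top.resolve_left fun hbot => ?_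
    have hcomm := commutator_coordSubgroup_le (H := H) i {j} S
    rw [Set.singleton_union, hbot, hpair, ih hi.2, le_bot_iff, ← _root_.commutator_def,
      commutator_eq_bot_iff_center_eq_top, hT i] at hcomm
    exact bot_ne_top hcomm

lemma eq_top_of_forall_exists_ne_mulEquiv [Finite ι] (hT : ∀ i, center (T i) = ⊥)
    (hsurj : ∀ i, H.map (Pi.evalMonoidHom T i) = ⊤)
    (hlink : ∀ i j, i ≠ j → ∀ φ : T j ≃* T i, ∃ h ∈ H, h i ≠ φ (h j)) : H = ⊤ := by
  classical
  refine (eq_top_iff' H).2 fun t => pi_mem_of_mulSingle_mem t fun i => ?_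
  have htop : coordSubgroup H i {i}ᶜ = ⊤ :=
    coordSubgroup_eq_top_of_finite hT hsurj hlink (Set.toFinite _) (fun hi => hi rfl)
  obtain ⟨h, hh, hne, hti⟩ := mem_coordSubgroup.1 (htop ▸ mem_top (t i))
  convert hh
  ext j
  rcases eq_or_ne j i with rfl | hj
  · rw [Pi.mulSingle_eq_same, hti]
  · rw [Pi.mulSingle_eq_of_ne hj, hne j hj]

lemma closure_const_pair_eq_top [Finite ι] {T : Type*} [Group T] [IsSimpleGroup T]
    (hT : center T = ⊥) {g : T} {x : ι → T} (hx : ∀ i, closure {g, x i} = ⊤)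
    (hlink : ∀ i j, i ≠ j → ∀ φ : MulAut T, φ g = g → x i ≠ φ (x j)) :
    closure {Function.const ι g, x} = ⊤ := by
  refine eq_top_of_forall_exists_ne_mulEquiv (fun _ => hT) (fun i => ?_) fun i j hij φ => ?_
  · rw [MonoidHom.map_closure, Set.image_pair]
    exact hx i
  · by_cases hφ : φ g = g
    · exact ⟨x, mem_closure_of_mem (by simp), hlink i j hij φ hφ⟩
    · exact ⟨Function.const ι g, mem_closure_of_mem (by simp), fun h => hφ h.symm⟩

end Subdirect

section Counting

variable {ι T : Type*} [Finite ι] [Finite T]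

lemma ncard_mul_natCard_le_of_ncard_update_le (s : Set (ι → T)) [DecidableEq ι] (i : ι) {B : ℕ}
    (hB : ∀ x : ι → T, {t | Function.update x i t ∈ s}.ncard ≤ B) :
    s.ncard * Nat.card T ≤ B * Nat.card T ^ Nat.card ι := by
  have := Fintype.ofFinite ι
  have := Fintype.ofFinite T
  let f : s × T → Σ x : ι → T, {t | Function.update x i t ∈ s} :=
    fun y => ⟨Function.update y.1 i y.2, y.1.1 i, by simp⟩
  have hf : Function.Injective f := by
    rintro ⟨⟨x, hx⟩, t⟩ ⟨⟨y, hy⟩, u⟩ hxy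
    have hup : Function.update x i t = Function.update y i u := congrArg Sigma.fst hxy
    have hi : x i = y i := congrArg (fun z => (z.2 : T)) hxy
    have htu : t = u := by simpa using congrFun hup i
    have hxy' : x = y := by
      rw [← Function.update_eq_self i x, hi, ← Function.update_idem t, hup, Function.update_idem,
        Function.update_eq_self]
    simp only [hxy', htu]
  calc s.ncard * Nat.card T
      = Nat.card (s × T) := by rw [Nat.card_prod, Nat.card_coe_set_eq]
    _ ≤ Nat.card (Σ x : ι → T, {t | Function.update x i t ∈ s}) :=
        Nat.card_le_card_of_injective f hf
    _ = ∑ x : ι → T, {t | Function.update x i t ∈ s}.ncard := by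
        simp only [Nat.card_sigma, Nat.card_coe_set_eq]
    _ ≤ ∑ _x : ι → T, B := Finset.sum_le_sum fun x _ => hB x
    _ = B * Nat.card T ^ Nat.card ι := by
        rw [Finset.sum_const, Finset.card_univ, ← Nat.card_eq_fintype_card, Nat.card_fun,
          smul_eq_mul, mul_comm]

variable [Group T]

lemma ncard_not_closure_or_exists_eq_apply_le (g : T) (x : ι → T) :
    {t | closure {g, t} ≠ ⊤ ∨ ∃ i, ∃ φ : MulAut T, φ g = g ∧ t = φ (x i)}.ncard ≤
      {t | closure {g, t} ≠ ⊤}.ncard + Nat.card ι * {φ : MulAut T | φ g = g}.ncard := by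
  let f : ι × {φ : MulAut T | φ g = g} → T := fun y => y.2.1 (x y.1)
  have hf : (Set.range f).ncard ≤ Nat.card ι * {φ : MulAut T | φ g = g}.ncard := by
    rw [← Nat.card_coe_set_eq {φ : MulAut T | φ g = g}, ← Nat.card_prod, ← Nat.card_coe_set_eq]
    exact Finite.card_range_le f
  have hsub : {t | ∃ i, ∃ φ : MulAut T, φ g = g ∧ t = φ (x i)} ⊆ Set.range f := by
    rintro _ ⟨i, φ, hφ, rfl⟩
    exact ⟨(i, ⟨φ, hφ⟩), rfl⟩
  exact (Set.ncard_union_le _ _).trans (Nat.add_le_add_left ((Set.ncard_le_ncard hsub).trans hf) _)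

lemma ncard_closure_const_pair_ne_top_mul_le [IsSimpleGroup T] (hT : center T = ⊥) (g : T) :
    {x : ι → T | closure {Function.const ι g, x} ≠ ⊤}.ncard * Nat.card T ≤
      Nat.card ι * ({t | closure {g, t} ≠ ⊤}.ncard +
        Nat.card ι * {φ : MulAut T | φ g = g}.ncard) * Nat.card T ^ Nat.card ι := by
  classical
  have := Fintype.ofFinite ι
  set C := {t | closure {g, t} ≠ ⊤}.ncard + Nat.card ι * {φ : MulAut T | φ g = g}.ncard
  let bad (i : ι) : Set (ι → T) :=
    {x | closure {g, x i} ≠ ⊤ ∨ ∃ j ≠ i, ∃ φ : MulAut T, φ g = g ∧ x i = φ (x j)}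
  have hbad (i : ι) : (bad i).ncard * Nat.card T ≤ C * Nat.card T ^ Nat.card ι := by
    refine ncard_mul_natCard_le_of_ncard_update_le _ i fun x =>
      (Set.ncard_le_ncard fun t ht => ?_).trans (ncard_not_closure_or_exists_eq_apply_le g x)
    refine ht.imp (by simp) ?_
    rintro ⟨j, hj, φ, hφ, htφ⟩
    exact ⟨j, φ, hφ, by simpa [hj] using htφ⟩
  have hcover : {x : ι → T | closure {Function.const ι g, x} ≠ ⊤} ⊆ ⋃ i, bad i := by
    intro x hx
    by_contra! hgood
    simp only [bad, Set.mem_iUnion, Set.mem_ofPred_eq, not_exists, not_or, not_not,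
      not_and] at hgood
    exact hx (closure_const_pair_eq_top hT (fun i => (hgood i).1) fun i j hij φ hφ =>
      (hgood i).2 j hij.symm φ hφ)
  calc {x : ι → T | closure {Function.const ι g, x} ≠ ⊤}.ncard * Nat.card T
      ≤ (∑ i, (bad i).ncard) * Nat.card T :=
        Nat.mul_le_mul_right _
          ((Set.ncard_le_ncard hcover).trans (Set.ncard_iUnion_le_of_fintype _))
    _ = ∑ i, (bad i).ncard * Nat.card T := Finset.sum_mul ..
    _ ≤ ∑ _i : ι, C * Nat.card T ^ Nat.card ι := Finset.sum_le_sum fun i _ => hbad i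
    _ = Nat.card ι * C * Nat.card T ^ Nat.card ι := by
        rw [Finset.sum_const, Finset.card_univ, ← Nat.card_eq_fintype_card, smul_eq_mul, mul_assoc]

end Counting

section GeneratingTime

lemma ncard_setOf_forall_mem {κ G : Type*} [Finite κ] (S : Set G) :
    {v : κ → G | ∀ i, v i ∈ S}.ncard = S.ncard ^ Nat.card κ := by
  rw [← Nat.card_coe_set_eq, ← Nat.card_coe_set_eq, ← Nat.card_fun]
  exact Nat.card_congr (Equiv.subtypePiEquivPi (p := fun _ t => t ∈ S))

variable {G : Type*} [Group G] {Y : Set G}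

lemma one_sub_genProb [Finite G] (Y : Set G) (n : ℕ) :
    1 - genProb G Y n =
      {v : Fin n → G | closure (Y ∪ Set.range v) ≠ ⊤}.ncard / (Nat.card G : ℝ) ^ n := by
  have hsum := Set.ncard_add_ncard_compl {v : Fin n → G | closure (Y ∪ Set.range v) = ⊤}
  rw [Nat.card_fun, Nat.card_fin] at hsum
  have hpow : (Nat.card G : ℝ) ^ n ≠ 0 := pow_ne_zero _ (Nat.cast_ne_zero.2 Nat.card_pos.ne')
  rw [eq_div_iff hpow, sub_mul, one_mul, sub_eq_iff_eq_add, genProb, div_mul_cancel₀ _ hpow,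
    add_comm]
  exact_mod_cast hsum.symm

lemma one_sub_genProb_nonneg [Finite G] (Y : Set G) (n : ℕ) : 0 ≤ 1 - genProb G Y n := by
  rw [one_sub_genProb]
  positivity

lemma one_sub_genProb_le_pow [Finite G] {δ : ℝ}
    (hδ : {x | closure (insert x Y) ≠ ⊤}.ncard ≤ δ * Nat.card G) (n : ℕ) :
    1 - genProb G Y n ≤ δ ^ n := by
  have hG : 0 < (Nat.card G : ℝ) := Nat.cast_pos.2 Nat.card_pos
  have hsub : {v : Fin n → G | closure (Y ∪ Set.range v) ≠ ⊤} ⊆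
      {v | ∀ i, v i ∈ {x | closure (insert x Y) ≠ ⊤}} := fun v hv i hi =>
    hv <| top_unique <| hi ▸ closure_mono (Set.insert_subset (.inr ⟨i, rfl⟩) fun _ => .inl)
  have hcard := Set.ncard_le_ncard hsub
  rw [ncard_setOf_forall_mem, Nat.card_fin] at hcard
  rw [one_sub_genProb, div_le_iff₀ (by positivity), ← mul_pow]
  calc ({v : Fin n → G | closure (Y ∪ Set.range v) ≠ ⊤}.ncard : ℝ)
      ≤ ({x | closure (insert x Y) ≠ ⊤}.ncard : ℝ) ^ n := by exact_mod_cast hcard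
    _ ≤ (δ * Nat.card G) ^ n := pow_le_pow_left₀ (by positivity) hδ n

lemma eTime_le_inv_one_sub [Finite G] {δ : ℝ} (hδ0 : 0 ≤ δ) (hδ1 : δ < 1)
    (hδ : {x | closure (insert x Y) ≠ ⊤}.ncard ≤ δ * Nat.card G) : eTime G Y ≤ (1 - δ)⁻¹ := by
  have hgeom := summable_geometric_of_lt_one hδ0 hδ1
  have hle := one_sub_genProb_le_pow hδ
  rw [eTime, ← tsum_geometric_of_lt_one hδ0 hδ1]
  exact (hgeom.of_nonneg_of_le (one_sub_genProb_nonneg Y) hle).tsum_le_tsum hle hgeom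

lemma exists_closure_insert_eq_top [Finite G] {δ : ℝ} (hδ1 : δ < 1)
    (hδ : {x | closure (insert x Y) ≠ ⊤}.ncard ≤ δ * Nat.card G) :
    ∃ x, closure (insert x Y) = ⊤ := by
  by_contra! hY
  have huniv : {x | closure (insert x Y) ≠ ⊤} = Set.univ := Set.eq_univ_of_forall hY
  rw [huniv, Set.ncard_univ] at hδ
  exact hδ.not_gt (mul_lt_of_lt_one_left (Nat.cast_pos.2 Nat.card_pos) hδ1)

-- A tuple that does not generate `G` misses some element of `G`.
lemma one_sub_genProb_le_mul_pow [Finite G] (Y : Set G) (n : ℕ) :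
    1 - genProb G Y n ≤ Nat.card G * (1 - (Nat.card G : ℝ)⁻¹) ^ n := by
  have := Fintype.ofFinite G
  have hG : 0 < (Nat.card G : ℝ) := Nat.cast_pos.2 Nat.card_pos
  have hsub : {v : Fin n → G | closure (Y ∪ Set.range v) ≠ ⊤} ⊆
      ⋃ y, {v | ∀ i, v i ∈ ({y}ᶜ : Set G)} := by
    intro v hv
    by_contra! hrange
    simp only [Set.mem_iUnion, Set.mem_ofPred_eq, Set.mem_compl_iff, Set.mem_singleton_iff,
      not_exists, not_forall, not_not] at hrange
    exact hv (top_unique fun y _ => mem_closure_of_mem (.inr (hrange y)))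
  have hcard := (Set.ncard_le_ncard hsub).trans (Set.ncard_iUnion_le_of_fintype _)
  have hcompl : ∀ y : G, ({y}ᶜ : Set G).ncard = Nat.card G - 1 := fun y => by
    rw [Set.ncard_compl, Set.ncard_singleton]
  simp only [ncard_setOf_forall_mem, Nat.card_fin, hcompl, Finset.sum_const, Finset.card_univ,
    smul_eq_mul, ← Nat.card_eq_fintype_card] at hcard
  rw [one_sub_genProb, div_le_iff₀ (by positivity), mul_assoc, ← mul_pow, sub_mul, one_mul,
    inv_mul_cancel₀ hG.ne', ← Nat.cast_pred Nat.card_pos]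
  exact_mod_cast hcard

lemma summable_one_sub_genProb [Finite G] (Y : Set G) : Summable fun n => 1 - genProb G Y n := by
  have hG : 1 ≤ (Nat.card G : ℝ) := Nat.one_le_cast.2 Nat.card_pos
  have hpos : 0 < (Nat.card G : ℝ)⁻¹ := by positivity
  exact ((summable_geometric_of_lt_one (sub_nonneg.2 (inv_le_one_of_one_le₀ hG))
    (sub_lt_self 1 hpos)).mul_left _).of_nonneg_of_le (one_sub_genProb_nonneg Y)
    (one_sub_genProb_le_mul_pow Y)

lemma mul_one_sub_le_eTime [Finite G] {c : ℝ} {m : ℕ} (hc : ∀ k < m, genProb G Y k ≤ c) :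
    m * (1 - c) ≤ eTime G Y := by
  calc m * (1 - c) = ∑ _k ∈ Finset.range m, (1 - c) := by
        rw [Finset.sum_const, Finset.card_range, nsmul_eq_mul]
    _ ≤ ∑ k ∈ Finset.range m, (1 - genProb G Y k) :=
        Finset.sum_le_sum fun k hk => sub_le_sub_left (hc k (Finset.mem_range.1 hk)) 1
    _ ≤ eTime G Y :=
        (summable_one_sub_genProb Y).sum_le_tsum _ fun k _ => one_sub_genProb_nonneg Y k

lemma genProb_le_one_sub_inv_index_pow [Finite G] {S : Subgroup G} (hS : S ≠ ⊤) (hY : Y ⊆ S)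
    (k : ℕ) : genProb G Y k ≤ 1 - (S.index : ℝ)⁻¹ ^ k := by
  have hG : 0 < (Nat.card G : ℝ) := Nat.cast_pos.2 Nat.card_pos
  have hsub : {v : Fin k → G | ∀ i, v i ∈ (S : Set G)} ⊆
      {v | closure (Y ∪ Set.range v) ≠ ⊤} := fun v hv htop => hS <| top_unique <| by
    rw [← htop, closure_le]
    exact Set.union_subset hY (Set.range_subset_iff.2 hv)
  have hcard := Set.ncard_le_ncard hsub
  rw [ncard_setOf_forall_mem, Nat.card_fin, ← Nat.card_coe_set_eq] at hcard
  have hindex : (S.index : ℝ)⁻¹ * Nat.card G = Nat.card S := by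
    rw [← S.index_mul_card, Nat.cast_mul, inv_mul_cancel_left₀]
    exact Nat.cast_ne_zero.2 FiniteIndex.index_ne_zero
  rw [le_sub_comm, one_sub_genProb, le_div_iff₀ (by positivity), ← mul_pow, hindex]
  exact_mod_cast hcard

variable {ι T : Type*} [Finite ι] [Group T] [Finite T]

lemma genProb_pi_le_pow (k : ℕ) : genProb (ι → T) ∅ k ≤ genProb T ∅ k ^ Nat.card ι := by
  have hmaps : Set.MapsTo Function.swap
      {v : Fin k → ι → T | closure (∅ ∪ Set.range v) = ⊤}
      {u | ∀ j, u j ∈ {w : Fin k → T | closure (∅ ∪ Set.range w) = ⊤}} := by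
    intro v hv j
    have hmap := congrArg (Subgroup.map (Pi.evalMonoidHom (fun _ : ι => T) j)) hv
    rw [MonoidHom.map_closure, Set.empty_union, ← Set.range_comp,
      map_top_of_surjective _ (Function.surjective_eval j)] at hmap
    rwa [Set.mem_ofPred_eq, Set.empty_union]
  have hcard := Set.ncard_le_ncard_of_injOn _ hmaps Function.swap_bijective.injective.injOn
  rw [ncard_setOf_forall_mem] at hcard
  rw [genProb, genProb, div_pow, Nat.card_fun, Nat.cast_pow, pow_right_comm]
  gcongr
  exact_mod_cast hcard

lemma genProb_pi_le_half {S : Subgroup T} (hS : S ≠ ⊤) {k : ℕ} (hk : S.index ^ k ≤ Nat.card ι) :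
    genProb (ι → T) ∅ k ≤ 1 / 2 := by
  have hindex : 0 < S.index := Nat.pos_of_ne_zero FiniteIndex.index_ne_zero
  have hk' : 1 ≤ Nat.card ι * (S.index : ℝ)⁻¹ ^ k := by
    rw [inv_pow, ← div_eq_mul_inv, one_le_div (by positivity)]
    exact_mod_cast hk
  calc genProb (ι → T) ∅ k ≤ genProb T ∅ k ^ Nat.card ι := genProb_pi_le_pow k
    _ ≤ Real.exp (-(S.index : ℝ)⁻¹ ^ k) ^ Nat.card ι := by
        refine pow_le_pow_left₀ (by unfold genProb; positivity) ?_ _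
        exact (genProb_le_one_sub_inv_index_pow hS (Set.empty_subset _) k).trans
          (Real.one_sub_le_exp_neg _)
    _ = Real.exp (-(Nat.card ι * (S.index : ℝ)⁻¹ ^ k)) := by rw [← Real.exp_nat_mul, mul_neg]
    _ ≤ Real.exp (-1) := Real.exp_le_exp.2 (neg_le_neg hk')
    _ ≤ 1 / 2 := Real.exp_neg_one_lt_half.le

end GeneratingTime
section CyclePair

/-- The product of a `p`-cycle and a `q`-cycle with disjoint supports, acting on `p + q` points. In
the group `ι → Alt (ZMod p ⊕ ZMod q)`, the given element is the constant tuple with this entry. -/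
def cyclePair (p q : ℕ) : Perm (ZMod p ⊕ ZMod q) :=
  Perm.sumCongr (Equiv.addRight 1) (Equiv.addRight 1)

lemma cyclePair_pow (p q k : ℕ) : cyclePair p q ^ k =
    Perm.sumCongr (Equiv.addRight (k : ZMod p)) (Equiv.addRight (k : ZMod q)) := by
  induction k with
  | zero => ext (a | a) <;> simp
  | succ k ih =>
    rw [pow_succ', ih]
    ext (a | a) <;> simp [cyclePair]

lemma cyclePair_pow_mul (p q : ℕ) : cyclePair p q ^ (p * q) = 1 := by
  simp [cyclePair_pow]

variable {p q : ℕ}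

lemma cyclePair_mem_alternatingGroup [NeZero p] [NeZero q] (hp : Odd p) (hq : Odd q) :
    cyclePair p q ∈ alternatingGroup (ZMod p ⊕ ZMod q) := by
  have hsign := congrArg sign (cyclePair_pow_mul p q)
  rw [map_pow, map_one] at hsign
  rw [mem_alternatingGroup]
  refine (Int.units_eq_one_or _).resolve_right fun hneg => ?_
  rw [hneg, (hp.mul hq).neg_one_pow] at hsign
  exact absurd hsign (by decide)

open scoped Pointwise in
lemma isPretransitive_of_cyclePair_mem [NeZero p] [NeZero q]
    {H : Subgroup (Perm (ZMod p ⊕ ZMod q))} {x : Perm (ZMod p ⊕ ZMod q)}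
    (hg : cyclePair p q ∈ H) (hx : x ∈ H)
    (hinl : ¬Set.MapsTo x (Set.range Sum.inl) (Set.range Sum.inl)) :
    IsPretransitive H (ZMod p ⊕ ZMod q) := by
  refine IsPretransitive.of_partition (s := Set.range Sum.inl) ?_ ?_ fun hstab => hinl ?_
  · rintro _ ⟨a, rfl⟩ _ ⟨b, rfl⟩
    refine ⟨⟨_, pow_mem hg (b - a).val⟩, ?_⟩
    simp [Subgroup.smul_def, cyclePair_pow]
  · rw [Set.compl_range_inl]
    rintro _ ⟨a, rfl⟩ _ ⟨b, rfl⟩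
    refine ⟨⟨_, pow_mem hg (b - a).val⟩, ?_⟩
    simp [Subgroup.smul_def, cyclePair_pow]
  · have hmem : (⟨x, hx⟩ : H) ∈
        stabilizer H (Set.range (Sum.inl : ZMod p → ZMod p ⊕ ZMod q)) := hstab ▸ mem_top _
    exact fun y hy => mem_stabilizer_iff.1 hmem ▸ Set.smul_mem_smul_set hy

variable [Fact p.Prime]

lemma orderOf_cyclePair_pow (hpq : ¬p ∣ q) : orderOf (cyclePair p q ^ q) = p := by
  refine orderOf_eq_prime (by rw [← pow_mul, mul_comm, cyclePair_pow_mul]) fun h => hpq ?_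
  have hfix := congrArg (· (Sum.inl 0)) h
  simpa [cyclePair_pow, ZMod.natCast_eq_zero_iff] using hfix

variable [NeZero q]

lemma isCycle_of_orderOf_eq (hqp : q < p) {x : Perm (ZMod p ⊕ ZMod q)} (hx : orderOf x = p) :
    x.IsCycle := by
  refine isCycle_of_prime_order' (hx.symm ▸ Fact.out) ?_
  rw [hx, Fintype.card_sum, ZMod.card, ZMod.card]
  omega

lemma alternatingGroup_le_of_cyclePair_mem (hq : 3 ≤ q) (hqp : q < p)
    {H : Subgroup (Perm (ZMod p ⊕ ZMod q))} {x : Perm (ZMod p ⊕ ZMod q)}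
    (hg : cyclePair p q ∈ H) (hx : x ∈ H)
    (hinl : ¬Set.MapsTo x (Set.range Sum.inl) (Set.range Sum.inl)) :
    alternatingGroup (ZMod p ⊕ ZMod q) ≤ H := by
  have hp : p.Prime := Fact.out
  have hcard : Nat.card (ZMod p ⊕ ZMod q) = p + q := by simp
  have htrans := isPretransitive_of_cyclePair_mem hg hx hinl
  have hord := orderOf_cyclePair_pow (Nat.not_dvd_of_pos_of_lt (NeZero.pos q) hqp)
  have hcycle := isCycle_of_orderOf_eq hqp hord
  have hsupp := hcycle.orderOf.symm.trans hord
  have hprim := isPreprimitive_of_isCycle_mem_of_card_lt hp hcycle hsupp (pow_mem hg q) (by omega)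
  exact alternatingGroup_le_of_isPreprimitive_of_isCycle_mem hprim hp (by omega) hcycle hsupp
    (pow_mem hg q)

variable {g : alternatingGroup (ZMod p ⊕ ZMod q)}

lemma closure_pair_eq_top_of_not_mapsTo (hq : 3 ≤ q) (hqp : q < p)
    (hg : (g : Perm (ZMod p ⊕ ZMod q)) = cyclePair p q) {x : alternatingGroup (ZMod p ⊕ ZMod q)}
    (hinl : ¬Set.MapsTo (x : Perm (ZMod p ⊕ ZMod q)) (Set.range Sum.inl) (Set.range Sum.inl)) :
    closure {g, x} = ⊤ := by
  have hle : alternatingGroup (ZMod p ⊕ ZMod q) ≤ (closure {g, x}).map (Subgroup.subtype _) :=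
    alternatingGroup_le_of_cyclePair_mem hq hqp ⟨g, subset_closure (.inl rfl), hg⟩
      ⟨x, subset_closure (.inr rfl), rfl⟩ hinl
  exact top_unique (map_subtype_le_map_subtype.1 ((map_subtype_le ⊤).trans hle))

lemma ncard_closure_pair_ne_top_le (hq : 3 ≤ q) (hqp : q < p)
    (hg : (g : Perm (ZMod p ⊕ ZMod q)) = cyclePair p q) :
    {x | closure {g, x} ≠ ⊤}.ncard ≤ p.factorial * q.factorial := by
  have hmaps : Set.MapsTo Subtype.val {x | closure {g, x} ≠ ⊤}
      ((sumCongrHom (ZMod p) (ZMod q)).range : Set (Perm (ZMod p ⊕ ZMod q))) := fun x hx =>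
    mem_sumCongrHom_range_of_perm_mapsTo_inl <| by
      by_contra hinl
      exact hx (closure_pair_eq_top_of_not_mapsTo hq hqp hg hinl)
  refine (Set.ncard_le_ncard_of_injOn _ hmaps Subtype.val_injective.injOn).trans_eq ?_
  rw [← Nat.card_coe_set_eq, SetLike.coe_sort_coe,
    ← Nat.card_congr (MonoidHom.ofInjective sumCongrHom_injective).toEquiv, Nat.card_prod,
    Nat.card_perm, Nat.card_perm, Nat.card_zmod, Nat.card_zmod]

lemma exists_orderOf_eq_closure_pair_eq_top (hq : 3 ≤ q) (hqp : q < p)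
    (hg : (g : Perm (ZMod p ⊕ ZMod q)) = cyclePair p q) :
    ∃ c, orderOf c = p ∧ closure {g, c} = ⊤ := by
  have hndvd := Nat.not_dvd_of_pos_of_lt (NeZero.pos q) hqp
  set s : Perm (ZMod p ⊕ ZMod q) := swap (Sum.inl 0) (Sum.inr 0) with hs
  let c : alternatingGroup (ZMod p ⊕ ZMod q) := MulAut.conjNormal s (g ^ q)
  have hc : (c : Perm (ZMod p ⊕ ZMod q)) = s * cyclePair p q ^ q * s⁻¹ := by
    rw [MulAut.conjNormal_apply, SubmonoidClass.coe_pow, hg]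
  refine ⟨c, ?_, closure_pair_eq_top_of_not_mapsTo hq hqp hg fun hinl => ?_⟩
  · rw [MulEquiv.orderOf_eq, ← Subgroup.orderOf_coe, SubmonoidClass.coe_pow, hg,
      orderOf_cyclePair_pow hndvd]
  · have hne : (q : ZMod p) ≠ 0 := by rwa [Ne, ZMod.natCast_eq_zero_iff]
    have hcinr : (c : Perm (ZMod p ⊕ ZMod q)) (Sum.inr 0) = Sum.inl (q : ZMod p) := by
      simp [hc, hs, cyclePair_pow, swap_apply_of_ne_of_ne, hne]
    obtain ⟨y, hy⟩ := (perm_mapsTo_inl_iff_mapsTo_inr _).1 hinl ⟨0, rfl⟩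
    rw [hcinr] at hy
    exact Sum.inr_ne_inl hy

lemma ncard_setOf_mulAut_apply_eq_self_le {G : Type*} [Group G] [Finite G] {a c : G}
    (hac : closure {a, c} = ⊤) :
    {φ : MulAut G | φ a = a}.ncard ≤ {x : G | orderOf x = orderOf c}.ncard := by
  refine Set.ncard_le_ncard_of_injOn (fun φ => φ c) (fun φ _ => MulEquiv.orderOf_eq φ c) ?_
  intro φ hφ ψ hψ hc
  refine MulEquiv.toMonoidHom_injective (MonoidHom.eq_of_eqOn_dense hac ?_)
  rintro x (rfl | rfl)
  exacts [hφ.trans hψ.symm, hc]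

lemma ncard_setOf_orderOf_eq_le (hqp : q < p) :
    {x : alternatingGroup (ZMod p ⊕ ZMod q) | orderOf x = p}.ncard ≤
      (p - 1).factorial * (p + q).choose p := by
  have hcard : Fintype.card (ZMod p ⊕ ZMod q) = p + q := by
    rw [Fintype.card_sum, ZMod.card, ZMod.card]
  rw [← hcard, ← card_of_cycleType_singleton (Fact.out : p.Prime).two_le (by omega),
    ← Set.ncard_coe_finset]
  refine Set.ncard_le_ncard_of_injOn Subtype.val (fun x hx => ?_) Subtype.val_injective.injOn
  have hx' : orderOf (x : Perm (ZMod p ⊕ ZMod q)) = p := (Subgroup.orderOf_coe x).trans hx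
  have hcycle := isCycle_of_orderOf_eq hqp hx'
  rw [Finset.coe_filter_univ, Set.mem_ofPred_eq, hcycle.cycleType, ← hcycle.orderOf, hx']

end CyclePair

lemma two_pow_mul_factorial_mul_factorial_le {p q : ℕ} (hqp : q ≤ p) :
    2 ^ q * (p.factorial * q.factorial) ≤ (p + q).factorial := by
  induction q with
  | zero => simp
  | succ q ih =>
    calc 2 ^ (q + 1) * (p.factorial * (q + 1).factorial)
        = 2 * (q + 1) * (2 ^ q * (p.factorial * q.factorial)) := by
          rw [Nat.factorial_succ]
          ring
      _ ≤ (p + q + 1) * (p + q).factorial := Nat.mul_le_mul (by omega) (ih (by omega))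
      _ = (p + (q + 1)).factorial := (Nat.factorial_succ _).symm

lemma two_pow_mul_factorial_pred_mul_choose_le {p q : ℕ} (hqp : q < p) :
    2 ^ q * ((p - 1).factorial * (p + q).choose p) ≤ (p + q).factorial := by
  have hpow : 2 ^ q ≤ p * q.factorial := by
    calc 2 ^ q ≤ (q + 1).factorial := by
          simpa [add_comm] using Nat.factorial_mul_pow_le_factorial (m := 1) (n := q)
      _ ≤ p * q.factorial := by
          rw [Nat.factorial_succ]
          gcongr
          omega
  calc 2 ^ q * ((p - 1).factorial * (p + q).choose p)
      ≤ p * q.factorial * ((p - 1).factorial * (p + q).choose p) := by gcongr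
    _ = (p + q).choose p * (p * (p - 1).factorial) * q.factorial := by ring
    _ = (p + q).factorial := by
        rw [Nat.mul_factorial_pred (by omega), Nat.choose_symm_add,
          Nat.add_choose_mul_factorial_mul_factorial]

lemma eventually_mul_two_mul_add_two_pow_le_two_pow (C : ℝ) (k : ℕ) :
    ∀ᶠ q : ℕ in Filter.atTop, C * (2 * q + 2) ^ k ≤ 2 ^ q := by
  have htendsto := ((tendsto_pow_const_div_const_pow_of_one_lt k one_lt_two).comp
    (Filter.tendsto_add_atTop_nat 1)).const_mul (2 * C * 2 ^ k)
  rw [mul_zero] at htendsto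
  filter_upwards [htendsto.eventually_le_const one_pos] with q hq
  rw [Function.comp_apply, mul_div_assoc', div_le_one (by positivity), Nat.cast_add_one,
    pow_succ] at hq
  rw [show (2 * q + 2 : ℝ) = 2 * (q + 1) by ring, mul_pow]
  linarith

section GeneratingPower

variable {p q : ℕ} [Fact p.Prime] [NeZero q]

lemma two_pow_mul_ncard_add_ncard_le (hq : 3 ≤ q) (hqp : q < p)
    {g : alternatingGroup (ZMod p ⊕ ZMod q)}
    (hg : (g : Perm (ZMod p ⊕ ZMod q)) = cyclePair p q) :
    2 ^ q * ({x | closure {g, x} ≠ ⊤}.ncard +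
      {φ : MulAut (alternatingGroup (ZMod p ⊕ ZMod q)) | φ g = g}.ncard) ≤
      4 * Nat.card (alternatingGroup (ZMod p ⊕ ZMod q)) := by
  obtain ⟨c, hc, hgc⟩ := exists_orderOf_eq_closure_pair_eq_top hq hqp hg
  have hgen := ncard_closure_pair_ne_top_le hq hqp hg
  have haut := ncard_setOf_mulAut_apply_eq_self_le hgc
  rw [hc] at haut
  have : Nontrivial (ZMod p ⊕ ZMod q) := ⟨Sum.inl 0, Sum.inr 0, Sum.inl_ne_inr⟩
  have hcard : 2 * Nat.card (alternatingGroup (ZMod p ⊕ ZMod q)) = (p + q).factorial := by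
    rw [two_mul_nat_card_alternatingGroup, Nat.card_perm, Nat.card_sum, Nat.card_zmod,
      Nat.card_zmod]
  calc 2 ^ q * ({x | closure {g, x} ≠ ⊤}.ncard +
        {φ : MulAut (alternatingGroup (ZMod p ⊕ ZMod q)) | φ g = g}.ncard)
      ≤ 2 ^ q * (p.factorial * q.factorial + (p - 1).factorial * (p + q).choose p) := by
        gcongr
        exact haut.trans (ncard_setOf_orderOf_eq_le hqp)
    _ ≤ (p + q).factorial + (p + q).factorial := by
        rw [mul_add]
        exact add_le_add (two_pow_mul_factorial_mul_factorial_le hqp.le)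
          (two_pow_mul_factorial_pred_mul_choose_le hqp)
    _ = 4 * Nat.card (alternatingGroup (ZMod p ⊕ ZMod q)) := by omega

variable {ι : Type*} [Finite ι] {δ : ℝ}

lemma ncard_closure_pair_const_ne_top_le {T : Type*} [Group T] [Finite T] [IsSimpleGroup T]
    (hT : center T = ⊥) {g : T}
    (hδ : (Nat.card ι : ℝ) ^ 2 *
      ({t | closure {g, t} ≠ ⊤}.ncard + {φ : MulAut T | φ g = g}.ncard) ≤ δ * Nat.card T) :
    {x : ι → T | closure {x, Function.const ι g} ≠ ⊤}.ncard ≤ δ * Nat.card (ι → T) := by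
  have hT0 : 0 < (Nat.card T : ℝ) := Nat.cast_pos.2 Nat.card_pos
  have hcount := ncard_closure_const_pair_ne_top_mul_le (ι := ι) hT g
  simp only [Set.pair_comm (Function.const ι g)] at hcount
  set N := Nat.card ι with hN
  set B := {t | closure {g, t} ≠ ⊤}.ncard
  set F := {φ : MulAut T | φ g = g}.ncard
  have hsq : N * (B + N * F) ≤ N ^ 2 * (B + F) := by
    nlinarith [Nat.mul_le_mul_right B (Nat.le_self_pow two_ne_zero N)]
  refine le_of_mul_le_mul_right ?_ hT0
  calc (({x : ι → T | closure {x, Function.const ι g} ≠ ⊤}.ncard : ℝ) * Nat.card T)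
      ≤ N ^ 2 * (B + F) * Nat.card T ^ N := by
        exact_mod_cast hcount.trans (Nat.mul_le_mul_right _ hsq)
    _ ≤ δ * Nat.card T * Nat.card T ^ N := by gcongr
    _ = δ * Nat.card (ι → T) * Nat.card T := by
        rw [Nat.card_fun, ← hN, Nat.cast_pow]
        ring

lemma ncard_closure_pair_const_cyclePair_ne_top_le (hq : 3 ≤ q) (hqp : q < p)
    {g : alternatingGroup (ZMod p ⊕ ZMod q)}
    (hg : (g : Perm (ZMod p ⊕ ZMod q)) = cyclePair p q)
    (hδ : 4 * (Nat.card ι : ℝ) ^ 2 ≤ δ * 2 ^ q) :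
    {x : ι → alternatingGroup (ZMod p ⊕ ZMod q) | closure {x, Function.const ι g} ≠ ⊤}.ncard ≤
      δ * Nat.card (ι → alternatingGroup (ZMod p ⊕ ZMod q)) := by
  have hcard : Nat.card (ZMod p ⊕ ZMod q) = p + q := by simp
  have : IsSimpleGroup (alternatingGroup (ZMod p ⊕ ZMod q)) :=
    alternatingGroup.isSimpleGroup (by omega)
  have hpair := two_pow_mul_ncard_add_ncard_le hq hqp hg
  refine ncard_closure_pair_const_ne_top_le (alternatingGroup.center_eq_bot (by omega)) ?_
  set t := Nat.card (alternatingGroup (ZMod p ⊕ ZMod q))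
  set B := {x | closure {g, x} ≠ ⊤}.ncard
  set F := {φ : MulAut (alternatingGroup (ZMod p ⊕ ZMod q)) | φ g = g}.ncard
  refine le_of_mul_le_mul_left ?_ (by positivity : (0 : ℝ) < 2 ^ q)
  calc (2 ^ q * (Nat.card ι ^ 2 * (B + F)) : ℝ) = Nat.card ι ^ 2 * (2 ^ q * (B + F)) := by ring
    _ ≤ Nat.card ι ^ 2 * (4 * t) := mul_le_mul_of_nonneg_left (mod_cast hpair) (by positivity)
    _ = 4 * Nat.card ι ^ 2 * t := by ring
    _ ≤ δ * 2 ^ q * t := by gcongr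
    _ = 2 ^ q * (δ * t) := by ring

end GeneratingPower

lemma exists_prime_add_two_and_pow_le {δ : ℝ} (hδ : 0 < δ) (k : ℕ) :
    ∃ q : ℕ, 3 ≤ q ∧ Odd q ∧ (q + 2).Prime ∧ 4 * (2 * q + 2) ^ k ≤ δ * 2 ^ q := by
  obtain ⟨M, hM⟩ :=
    Filter.eventually_atTop.1 (eventually_mul_two_mul_add_two_pow_le_two_pow (4 / δ) k)
  obtain ⟨p, hpM, hp⟩ := Nat.exists_infinite_primes (M + 5)
  obtain ⟨q, rfl⟩ := Nat.exists_eq_add_of_le' (show 2 ≤ p by omega)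
  refine ⟨q, by omega, ?_, hp, ?_⟩
  · simpa [Nat.odd_add] using hp.odd_of_ne_two (by omega)
  · have hq := hM q (by omega)
    rwa [div_mul_eq_mul_div, div_le_iff₀' hδ] at hq

lemma le_eTime_pi_alternatingGroup {α : Type*} [Fintype α] [DecidableEq α] (hα : 3 ≤ Nat.card α)
    {ι : Type*} [Finite ι] {n : ℕ} (hn : Nat.card α ^ (2 * n) ≤ Nat.card ι) :
    n ≤ eTime (ι → alternatingGroup α) ∅ := by
  have htrans : IsPretransitive (alternatingGroup α) α :=
    alternatingGroup.isPretransitive_of_three_le_card α hα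
  obtain ⟨a⟩ : Nonempty α := Nat.card_pos_iff.1 (by omega) |>.1
  have hindex : (stabilizer (alternatingGroup α) a).index = Nat.card α :=
    index_stabilizer_of_transitive _ a
  have hne : stabilizer (alternatingGroup α) a ≠ ⊤ := fun htop => by
    rw [htop, index_top] at hindex
    omega
  calc (n : ℝ) = (2 * n : ℕ) * (1 - 1 / 2) := by push_cast; ring
    _ ≤ eTime (ι → alternatingGroup α) ∅ := mul_one_sub_le_eTime fun k hk =>
        genProb_pi_le_half hne <| by
          rw [hindex]
          exact (Nat.pow_le_pow_right (by omega) hk.le).trans hn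

theorem stmt5_general (n : ℕ) {ε : ℝ} (hε : 0 < ε) :
    ∃ (G : Type) (_ : Group G) (_ : Finite G),
      (∃ a b : G, Subgroup.closure {a, b} = ⊤) ∧
      (n : ℝ) ≤ eTime G ∅ ∧ ∃ g : G, eTime G {g} ≤ 1 + ε := by
  set δ := ε / (1 + ε) with hδ
  have hδ1 : δ < 1 := (div_lt_one (by positivity)).2 (lt_one_add ε)
  have hinv : (1 - δ)⁻¹ = 1 + ε := by rw [hδ, one_sub_div (by positivity)]; simp
  obtain ⟨q, hq, hodd, hp, hlarge⟩ :=
    exists_prime_add_two_and_pow_le (show 0 < δ by positivity) (2 * n * 2)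
  have : Fact (q + 2).Prime := ⟨hp⟩
  have : NeZero q := ⟨by omega⟩
  have hcard : Nat.card (ZMod (q + 2) ⊕ ZMod q) = 2 * q + 2 := by
    rw [Nat.card_sum, Nat.card_zmod, Nat.card_zmod]
    ring
  let g : alternatingGroup (ZMod (q + 2) ⊕ ZMod q) :=
    ⟨cyclePair (q + 2) q, cyclePair_mem_alternatingGroup (hodd.add_even even_two) hodd⟩
  let ι := Fin ((2 * q + 2) ^ (2 * n))
  have hbad := ncard_closure_pair_const_cyclePair_ne_top_le (ι := ι) (δ := δ) hq (by omega)
    (g := g) rfl (by rwa [Nat.card_fin, Nat.cast_pow, ← pow_mul, Nat.cast_add, Nat.cast_mul])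
  obtain ⟨x, hx⟩ := exists_closure_insert_eq_top hδ1 hbad
  exact ⟨ι → alternatingGroup (ZMod (q + 2) ⊕ ZMod q), inferInstance, inferInstance, ⟨x, _, hx⟩,
    le_eTime_pi_alternatingGroup (by omega) (by rw [hcard, Nat.card_fin]), Function.const ι g,
    (eTime_le_inv_one_sub (by positivity) hδ1 hbad).trans_eq hinv⟩

/-- For every positive integer `n` there is a finite 2-generated group `G` with
`e(G) ≥ n` and an element `g ∈ G` with `e(G,g) ≤ 5`. -/
theorem stmt5 (n : ℕ) (hn : 0 < n) :
    ∃ (G : Type) (_ : Group G) (_ : Finite G),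
      (∃ a b : G, Subgroup.closure {a, b} = ⊤) ∧
      (n : ℝ) ≤ eTime G ∅ ∧ ∃ g : G, eTime G {g} ≤ 5 := by
  obtain ⟨G, hG, hfin, hgen, hle, g, hg⟩ := stmt5_general n four_pos
  exact ⟨G, hG, hfin, hgen, hle, g, hg.trans_eq (by norm_num)⟩
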